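/- Central limit theorem in the critical regime for the Type-II ERW (one-dimensional marginal): if m = m' and p = p_c^m = (m+1)/(2m), then (S_{2n} − n(ū + w̄))/√(n·log n) converges in distribution, as n → ∞, to the centered multivariate Gaussian distribution on ℝ^d with covariance matrix Σ(U) + Σ(W). -/

import Mathlib

/-!
By Lévy's continuity theorem it suffices to treat the characteristic function of the normalized
walk at a fixed frequency `l`. Its argument splits into the two scores `X_n = ∑_{k ≤ n} x_{ξ_k}`,
with centered weights `x_i = ⟨l, u_i - ū⟩`, and the analogous score for `η`, `w`. The index
sequences are independent, so the characteristic function factors and each score is treated alone.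

At the critical memory parameter the conditional law of `ξ_{n+1}` is half the empirical law of the
past plus half the uniform law, hence `E[x_{ξ_{n+1}} | F_n] = X_n / (2n)` for every centered weight
`x` (`integral_step_smul`). Used with `X_n` itself this gives `E[X_n²] = O(n^{3/2})`
(`integral_score_sq_le`). The increment `D` of `X_n / √n` has drift `O(n^{-3/2})`, since
`(n+1)^{-1/2} / (2n)` compensates `n^{-1/2} - (n+1)^{-1/2}`. Its conditional second moment is
`σ² / n`, where `σ²` is the uniform variance of `x`, up to terms of size `O(n^{-5/4})` in `L¹`: apply
the moment bound to `x` and to the centered squares `x² - σ²`. A third-order Taylor expansion then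
shows that one step multiplies the characteristic function of `X_n / √n` at `s` by
`exp (-s² σ² / (2n))` up to `O(|s| n^{-5/4})` (`norm_normCharFun_step_le`).

These errors are summable and the factors are at most `1`, so iterating yields
`exp (-s² σ² H_{n-1} / 2) + O(|s|)` uniformly in `n` (`norm_normCharFun_sub_le`), `H` being the
harmonic numbers. Taking `s = (log n)^{-1/2}` and using `H_{n-1} / log n → 1` gives the limit
`exp (-σ² / 2)` (`tendsto_integral_exp_score`). The product of the two limits is the characteristic
function of the Gaussian with covariance `Σ(U) + Σ(W)` (`dotProduct_cov_mulVec`,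
`isCenteredGaussianCov_map`).
-/

open MeasureTheory ProbabilityTheory Filter Finset Topology Matrix

noncomputable section

/-- The σ-algebra generated by the steps `ξ 1, …, ξ n` of the walk. -/
def stepFiltration {Ω : Type*} [MeasurableSpace Ω] {m : ℕ} (ξ : ℕ → Ω → Fin m) (n : ℕ) :
    MeasurableSpace Ω :=
  ⨆ k ∈ Finset.Icc 1 n, MeasurableSpace.comap (ξ k) ⊤

/-- A Type-II elephant random walk with memory parameter `p`: two independent
reinforced sequences of step indices, `ξ` (values in `Fin m`, first step `i0`) and
`η` (values in `Fin m'`, first step `j0`). -/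
structure IsTypeIIERW {Ω : Type*} [MeasurableSpace Ω] (μ : Measure Ω)
    (m m' : ℕ) (p : ℝ) (i0 : Fin m) (j0 : Fin m')
    (ξ : ℕ → Ω → Fin m) (η : ℕ → Ω → Fin m') : Prop where
  measurable_fst : ∀ n, Measurable (ξ n)
  measurable_snd : ∀ n, Measurable (η n)
  first_fst : ∀ᵐ ω ∂μ, ξ 1 ω = i0
  first_snd : ∀ᵐ ω ∂μ, η 1 ω = j0
  cond_fst : ∀ n : ℕ, 1 ≤ n → ∀ j : Fin m,
    (μ[(fun ω => if ξ (n + 1) ω = j then (1 : ℝ) else 0) | stepFiltration ξ n]) =ᵐ[μ]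
      (fun ω => (1 / (n : ℝ)) * ∑ k ∈ Finset.Icc 1 n,
        (p * (if ξ k ω = j then (1 : ℝ) else 0)
          + ((1 - p) / ((m : ℝ) - 1)) * (if ξ k ω = j then (0 : ℝ) else 1)))
  cond_snd : ∀ n : ℕ, 1 ≤ n → ∀ j : Fin m',
    (μ[(fun ω => if η (n + 1) ω = j then (1 : ℝ) else 0) | stepFiltration η n]) =ᵐ[μ]
      (fun ω => (1 / (n : ℝ)) * ∑ k ∈ Finset.Icc 1 n,
        (p * (if η k ω = j then (1 : ℝ) else 0)
          + ((1 - p) / ((m' : ℝ) - 1)) * (if η k ω = j then (0 : ℝ) else 1)))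
  indep : IndepFun (fun ω => fun k => ξ k ω) (fun ω => fun k => η k ω) μ

/-- `ν` is the centered (multivariate) Gaussian distribution on `ℝ^d` with covariance
matrix `S`: equivalently, every linear functional `x ↦ ⟨l, x⟩` pushes `ν` forward to a
real centered Gaussian with variance `⟨l, S l⟩`. -/
def IsCenteredGaussianCov {d : ℕ} (ν : Measure (Fin d → ℝ))
    (S : Matrix (Fin d) (Fin d) ℝ) : Prop :=
  IsProbabilityMeasure ν ∧ ∀ l : Fin d → ℝ,
    ν.map (fun x => l ⬝ᵥ x) =
      ProbabilityTheory.gaussianReal 0 (Real.toNNReal (l ⬝ᵥ S.mulVec l))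

section

/-! ### Scores and the critical drift identity -/

variable {Ω : Type*} {m : ℕ} {ξ : ℕ → Ω → Fin m}

/-- The score `∑_{k=1}^n x_{ξ_k}` of the first `n` steps, each index `i` being weighted by `x i`. -/
def score (x : Fin m → ℝ) (ξ : ℕ → Ω → Fin m) (n : ℕ) (ω : Ω) : ℝ :=
  ∑ k ∈ Finset.Icc 1 n, x (ξ k ω)

lemma score_succ (x : Fin m → ℝ) (n : ℕ) (ω : Ω) :
    score x ξ (n + 1) ω = score x ξ n ω + x (ξ (n + 1) ω) := by
  simp [score, Finset.sum_Icc_succ_top]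

lemma abs_score_le {x : Fin m → ℝ} {B : ℝ} (hB : ∀ i, |x i| ≤ B) (n : ℕ) (ω : Ω) :
    |score x ξ n ω| ≤ n * B := by
  refine (Finset.abs_sum_le_sum_abs _ _).trans ?_
  refine (Finset.sum_le_sum fun k _ => hB (ξ k ω)).trans ?_
  simp

/-- Summing the conditional probabilities against a centered weight leaves `1/(2n)` times the
score: this is where the critical value of `p` enters. -/
lemma sum_cond_eq (hm : 2 ≤ m) {x : Fin m → ℝ} (hx : ∑ i, x i = 0) {n : ℕ} (ω : Ω) :
    ∑ j, x j * ((1 / (n : ℝ)) * ∑ k ∈ Finset.Icc 1 n,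
        ((((m : ℝ) + 1) / (2 * m)) * (if ξ k ω = j then (1 : ℝ) else 0)
          + ((1 - ((m : ℝ) + 1) / (2 * m)) / ((m : ℝ) - 1)) *
            (if ξ k ω = j then (0 : ℝ) else 1))) = (1 / (2 * (n : ℝ))) * score x ξ n ω := by
  have hm' : (2 : ℝ) ≤ m := by exact_mod_cast hm
  have hq : (1 - ((m : ℝ) + 1) / (2 * m)) / ((m : ℝ) - 1) = 1 / (2 * m) := by
    have h1 : (m : ℝ) ≠ 0 := by linarith
    have h2 : (m : ℝ) - 1 ≠ 0 := by linarith
    field_simp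
    ring
  have hp : ((m : ℝ) + 1) / (2 * m) = 1 / 2 + 1 / (2 * m) := by
    have h1 : (m : ℝ) ≠ 0 := by linarith
    field_simp
  rw [hq, hp]
  have h1 : ∀ j, ∀ k, ((1 / 2 + 1 / (2 * (m : ℝ))) * (if ξ k ω = j then (1 : ℝ) else 0)
      + 1 / (2 * (m : ℝ)) * (if ξ k ω = j then (0 : ℝ) else 1))
      = 1 / 2 * (if ξ k ω = j then (1 : ℝ) else 0) + 1 / (2 * (m : ℝ)) := by
    intro j k; split_ifs <;> ring
  simp_rw [h1, Finset.mul_sum]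
  rw [Finset.sum_comm]
  unfold score
  rw [Finset.mul_sum]
  refine Finset.sum_congr rfl fun k _ => ?_
  have h2 : ∀ j, x j * (1 / (n : ℝ) * (1 / 2 * (if ξ k ω = j then (1 : ℝ) else 0)
      + 1 / (2 * (m : ℝ)))) = (1 / (2 * (n : ℝ))) * (if ξ k ω = j then x j else 0)
      + (1 / (n : ℝ) * (1 / (2 * (m : ℝ)))) * x j := by
    intro j
    have : (1 / (2 * (n : ℝ))) = 1 / n * (1 / 2) := by rw [one_div_mul_one_div, mul_comm]
    rw [this]
    split_ifs <;> ring
  simp_rw [h2]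
  rw [Finset.sum_add_distrib, ← Finset.mul_sum, ← Finset.mul_sum, hx]
  simp

variable [MeasurableSpace Ω] {μ : Measure Ω}

/-- One index sequence of the walk at criticality: measurable indices whose next value has
conditional law `½ · (empirical law) + ½ · (uniform law)`, written with the critical `p`. -/
structure IsCriticalSeq (μ : Measure Ω) (ξ : ℕ → Ω → Fin m) : Prop where
  two_le : 2 ≤ m
  meas : ∀ n, Measurable (ξ n)
  cond : ∀ n : ℕ, 1 ≤ n → ∀ j : Fin m,
    (μ[(fun ω => if ξ (n + 1) ω = j then (1 : ℝ) else 0) | stepFiltration ξ n]) =ᵐ[μ]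
      (fun ω => (1 / (n : ℝ)) * ∑ k ∈ Finset.Icc 1 n,
        ((((m : ℝ) + 1) / (2 * m)) * (if ξ k ω = j then (1 : ℝ) else 0)
          + ((1 - ((m : ℝ) + 1) / (2 * m)) / ((m : ℝ) - 1)) *
            (if ξ k ω = j then (0 : ℝ) else 1)))

lemma stepFiltration_le (hξ : ∀ n, Measurable (ξ n)) (n : ℕ) :
    stepFiltration ξ n ≤ ‹MeasurableSpace Ω› := by
  refine iSup₂_le fun k _ => ?_
  exact (hξ k).comap_le

lemma measurable_step (x : Fin m → ℝ) {n k : ℕ} (hk : k ∈ Finset.Icc 1 n) :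
    Measurable[stepFiltration ξ n] (fun ω => x (ξ k ω)) := by
  have h1 : MeasurableSpace.comap (ξ k) ⊤ ≤ stepFiltration ξ n :=
    le_iSup₂ (f := fun k (_ : k ∈ Finset.Icc 1 n) => MeasurableSpace.comap (ξ k) ⊤) k hk
  have h2 : Measurable[stepFiltration ξ n] (ξ k) := fun s hs => h1 _ ⟨s, trivial, rfl⟩
  exact (measurable_from_top (f := x)).comp h2

lemma measurable_score (x : Fin m → ℝ) (n : ℕ) :
    Measurable[stepFiltration ξ n] (score x ξ n) :=
  Finset.measurable_sum _ fun _ hk => measurable_step x hk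

lemma measurable_score' (hξ : ∀ n, Measurable (ξ n)) (x : Fin m → ℝ) (n : ℕ) :
    Measurable (score x ξ n) :=
  (measurable_score x n).mono (stepFiltration_le hξ n) le_rfl

lemma measurable_step' (hξ : ∀ n, Measurable (ξ n)) (x : Fin m → ℝ) (n : ℕ) :
    Measurable (fun ω => x (ξ n ω)) :=
  (measurable_from_top (f := x)).comp (hξ n)

/-- The drift identity `E[x_{ξ_{n+1}} W] = E[X_n W] / (2n)` for centered weights `x` and bounded
`W` depending on the first `n` steps. -/
lemma integral_step_smul [IsProbabilityMeasure μ] (h : IsCriticalSeq μ ξ) {E : Type*}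
    [NormedAddCommGroup E] [NormedSpace ℝ E] [CompleteSpace E]
    {x : Fin m → ℝ} (hx : ∑ i, x i = 0) {n : ℕ} (hn : 1 ≤ n)
    {W : Ω → E} (hW : StronglyMeasurable[stepFiltration ξ n] W) {K : ℝ} (hK : ∀ ω, ‖W ω‖ ≤ K) :
    ∫ ω, x (ξ (n + 1) ω) • W ω ∂μ = (1 / (2 * (n : ℝ))) • ∫ ω, score x ξ n ω • W ω ∂μ := by
  have hF := stepFiltration_le h.meas n
  have hW' : StronglyMeasurable W := hW.mono hF
  have hind : ∀ j, Measurable (fun ω => if ξ (n + 1) ω = j then (1 : ℝ) else 0) := fun j =>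
    measurable_step' h.meas (fun i => if i = j then (1 : ℝ) else 0) (n + 1)
  have hindI : ∀ j, Integrable (fun ω => if ξ (n + 1) ω = j then (1 : ℝ) else 0) μ := fun j =>
    Integrable.of_bound (hind j).aestronglyMeasurable 1
      (Eventually.of_forall fun ω => by split_ifs <;> simp)
  have hprodI : ∀ j, Integrable (fun ω => (if ξ (n + 1) ω = j then (1 : ℝ) else 0) • W ω) μ :=
    fun j => Integrable.of_bound
      ((hind j).aestronglyMeasurable.smul hW'.aestronglyMeasurable) K
      (Eventually.of_forall fun ω => by
        have := (norm_nonneg _).trans (hK ω)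
        split_ifs <;> simp [hK ω, this])
  let p' : Fin m → Ω → ℝ := fun j ω => (1 / (n : ℝ)) * ∑ k ∈ Finset.Icc 1 n,
        ((((m : ℝ) + 1) / (2 * m)) * (if ξ k ω = j then (1 : ℝ) else 0)
          + ((1 - ((m : ℝ) + 1) / (2 * m)) / ((m : ℝ) - 1)) *
            (if ξ k ω = j then (0 : ℝ) else 1))
  have hpull : ∀ j, μ[fun ω => (if ξ (n + 1) ω = j then (1 : ℝ) else 0) • W ω | stepFiltration ξ n]
      =ᵐ[μ] fun ω => p' j ω • W ω := by
    intro j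
    have h1 := condExp_bilin_of_stronglyMeasurable_right (μ := μ) (m := stepFiltration ξ n)
      (ContinuousLinearMap.lsmul ℝ ℝ : ℝ →L[ℝ] E →L[ℝ] E) hW
      (by simpa using hprodI j) (hindI j)
    refine EventuallyEq.trans (by simpa using h1) ?_
    filter_upwards [h.cond n hn j] with ω hω
    rw [hω]
  have hint : ∀ j, ∫ ω, (if ξ (n + 1) ω = j then (1 : ℝ) else 0) • W ω ∂μ
      = ∫ ω, p' j ω • W ω ∂μ := fun j => by
    rw [← integral_condExp hF, integral_congr_ae (hpull j)]
  have hpI : ∀ j, Integrable (fun ω => p' j ω • W ω) μ := fun j =>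
    (integrable_condExp (m := stepFiltration ξ n)).congr (hpull j)
  have e1 : ∀ ω, x (ξ (n + 1) ω) • W ω
      = ∑ j, x j • ((if ξ (n + 1) ω = j then (1 : ℝ) else 0) • W ω) := by
    intro ω
    simp [ite_smul]
  have e2 : ∀ ω, (1 / (2 * (n : ℝ))) • (score x ξ n ω • W ω) = ∑ j, x j • (p' j ω • W ω) := by
    intro ω
    rw [smul_smul, ← sum_cond_eq h.two_le hx ω, Finset.sum_smul]
    refine Finset.sum_congr rfl fun j _ => ?_
    rw [smul_smul]
  rw [← integral_smul]
  simp_rw [e1, e2]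
  rw [integral_finsetSum _ fun j _ => (hprodI j).fun_smul (x j),
    integral_finsetSum _ fun j _ => (hpI j).fun_smul (x j)]
  refine Finset.sum_congr rfl fun j _ => ?_
  rw [integral_smul, integral_smul, hint]

/-! ### Moment bounds -/

/-- The second moment of a centered score is `O(n^{3/2})`. (The true order is `n log n`, but any
exponent below `2` suffices.) -/
lemma integral_score_sq_le [IsProbabilityMeasure μ] (h : IsCriticalSeq μ ξ)
    {x : Fin m → ℝ} (hx : ∑ i, x i = 0) {B : ℝ} (hB : ∀ i, |x i| ≤ B) {n : ℕ} (hn : 1 ≤ n) :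
    ∫ ω, score x ξ n ω ^ 2 ∂μ ≤ 2 * B ^ 2 * (n * √n) := by
  have hX := fun n => measurable_score' h.meas x n
  have hx' := fun n => measurable_step' h.meas x n
  have hB0 : 0 ≤ B := (abs_nonneg _).trans (hB ⟨0, by have := h.two_le; omega⟩)
  have hxsq : ∀ i, x i ^ 2 ≤ B ^ 2 := fun i => sq_le_sq' (abs_le.1 (hB i)).1 (abs_le.1 (hB i)).2
  have hXsqI : ∀ n, Integrable (fun ω => score x ξ n ω ^ 2) μ := fun n =>
    Integrable.of_bound ((hX n).pow_const 2).aestronglyMeasurable ((n * B) ^ 2)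
      (Eventually.of_forall fun ω => by
        rw [norm_pow, Real.norm_eq_abs]
        exact pow_le_pow_left₀ (abs_nonneg _) (abs_score_le hB n ω) 2)
  have hxsqI : ∀ n, Integrable (fun ω => x (ξ n ω) ^ 2) μ := fun n =>
    Integrable.of_bound ((hx' n).pow_const 2).aestronglyMeasurable (B ^ 2)
      (Eventually.of_forall fun ω => by
        rw [norm_pow, Real.norm_eq_abs]
        exact pow_le_pow_left₀ (abs_nonneg _) (hB _) 2)
  have hxX : ∀ n, Integrable (fun ω => x (ξ (n + 1) ω) * score x ξ n ω) μ := fun n =>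
    Integrable.of_bound ((hx' (n + 1)).mul (hX n)).aestronglyMeasurable (B * (n * B))
      (Eventually.of_forall fun ω => by
        rw [norm_mul, Real.norm_eq_abs, Real.norm_eq_abs]
        exact mul_le_mul (hB _) (abs_score_le hB n ω) (abs_nonneg _) hB0)
  have hxle : ∀ n, ∫ ω, x (ξ n ω) ^ 2 ∂μ ≤ B ^ 2 := fun n => by
    refine (integral_mono (hxsqI n) (integrable_const (B ^ 2)) fun ω => hxsq _).trans ?_
    simp
  induction n, hn using Nat.le_induction with
  | base =>
    have : ∀ ω, score x ξ 1 ω = x (ξ 1 ω) := fun ω => by simp [score]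
    simp_rw [this]
    have := hxle 1
    simp
    nlinarith [sq_nonneg B]
  | succ n hn ih =>
    have hdrift : ∫ ω, x (ξ (n + 1) ω) * score x ξ n ω ∂μ
        = 1 / (2 * (n : ℝ)) * ∫ ω, score x ξ n ω ^ 2 ∂μ := by
      have := integral_step_smul h hx hn (W := score x ξ n) (K := n * B)
        (measurable_score x n).stronglyMeasurable (fun ω => abs_score_le hB n ω)
      simpa [sq] using this
    have hrec : ∫ ω, score x ξ (n + 1) ω ^ 2 ∂μ = ∫ ω, score x ξ n ω ^ 2 ∂μ
        + 2 * ∫ ω, x (ξ (n + 1) ω) * score x ξ n ω ∂μ + ∫ ω, x (ξ (n + 1) ω) ^ 2 ∂μ := by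
      rw [← integral_const_mul, ← integral_add (hXsqI n) ((hxX n).const_mul 2),
        ← integral_add ((hXsqI n).fun_add ((hxX n).const_mul 2)) (hxsqI (n + 1))]
      refine integral_congr_ae (Eventually.of_forall fun ω => ?_)
      simp only [score_succ]
      ring
    rw [hrec, hdrift]
    have hn0 : (1 : ℝ) ≤ n := by exact_mod_cast hn
    have hlast := hxle (n + 1)
    set I := ∫ ω, score x ξ n ω ^ 2 ∂μ
    set q := √(n : ℝ)
    set r := √((n : ℝ) + 1)
    have hq : q ^ 2 = n := Real.sq_sqrt (by linarith)
    have hr : r ^ 2 = (n : ℝ) + 1 := Real.sq_sqrt (by linarith)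
    have hq1 : 1 ≤ q := Real.one_le_sqrt.2 hn0
    have hqr : q ≤ r := Real.sqrt_le_sqrt (by linarith)
    have key : 2 * B ^ 2 * (n * q) * (1 + 1 / n) + B ^ 2 ≤ 2 * B ^ 2 * ((n + 1) * r) := by
      have e : 2 * B ^ 2 * (n * q) * (1 + 1 / (n : ℝ)) = 2 * B ^ 2 * ((n + 1) * q) := by
        field_simp
      rw [e]
      have h1 : 1 ≤ 2 * ((n + 1) * (r - q)) := by
        rw [← hr]
        have h2 : (r - q) * (r + q) = 1 := by nlinarith
        nlinarith [mul_nonneg (sub_nonneg.2 hqr) (by linarith : 0 ≤ r)]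
      nlinarith [mul_le_mul_of_nonneg_left h1 (sq_nonneg B)]
    have h3 : I * (1 + 1 / n) ≤ 2 * B ^ 2 * (n * q) * (1 + 1 / (n : ℝ)) :=
      mul_le_mul_of_nonneg_right ih (by positivity)
    have e4 : I + 2 * (1 / (2 * (n : ℝ)) * I) = I * (1 + 1 / n) := by
      field_simp
    push_cast
    linarith

/-- The first absolute moment of a centered score is `O(q^3)` where `q = n^{1/4}`. -/
lemma integral_abs_score_le [IsProbabilityMeasure μ] (h : IsCriticalSeq μ ξ)
    {x : Fin m → ℝ} (hx : ∑ i, x i = 0) {B : ℝ} (hB : ∀ i, |x i| ≤ B) {n : ℕ} (hn : 1 ≤ n)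
    {q : ℝ} (hq : 0 < q) (hqn : q ^ 4 = n) :
    ∫ ω, |score x ξ n ω| ∂μ ≤ (B ^ 2 + 1) * q ^ 3 := by
  have hX := measurable_score' h.meas x n
  have h2 := integral_score_sq_le h hx hB hn
  have hs : √(n : ℝ) = q ^ 2 := by
    rw [← hqn, show q ^ 4 = (q ^ 2) ^ 2 by ring, Real.sqrt_sq (by positivity)]
  rw [hs, ← hqn] at h2
  have hXsqI : Integrable (fun ω => score x ξ n ω ^ 2) μ :=
    Integrable.of_bound (hX.pow_const 2).aestronglyMeasurable ((n * B) ^ 2)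
      (Eventually.of_forall fun ω => by
        rw [norm_pow, Real.norm_eq_abs]
        exact pow_le_pow_left₀ (abs_nonneg _) (abs_score_le hB n ω) 2)
  have hXI : Integrable (fun ω => |score x ξ n ω|) μ :=
    Integrable.of_bound hX.abs.aestronglyMeasurable (n * B)
      (Eventually.of_forall fun ω => by
        rw [Real.norm_eq_abs, abs_abs]
        exact abs_score_le hB n ω)
  -- AM-GM with the weight `q ^ 3`, the order of the standard deviation bound
  have hpt : ∀ ω, |score x ξ n ω| ≤ (1 / (2 * q ^ 3)) * score x ξ n ω ^ 2 + q ^ 3 / 2 := by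
    intro ω
    have e : (1 / (2 * q ^ 3)) * score x ξ n ω ^ 2 + q ^ 3 / 2
        = (|score x ξ n ω| ^ 2 + (q ^ 3) ^ 2) / (2 * q ^ 3) := by
      rw [sq_abs]
      field_simp
    rw [e, le_div_iff₀ (by positivity)]
    nlinarith [sq_nonneg (|score x ξ n ω| - q ^ 3)]
  refine (integral_mono hXI ((hXsqI.const_mul _).add (integrable_const (q ^ 3 / 2))) hpt).trans ?_
  simp only [Pi.add_apply]
  rw [integral_add (hXsqI.const_mul _) (integrable_const _), integral_const_mul]
  simp only [integral_const, probReal_univ, one_smul]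
  have h3 : 1 / (2 * q ^ 3) * ∫ ω, score x ξ n ω ^ 2 ∂μ
      ≤ 1 / (2 * q ^ 3) * (2 * B ^ 2 * (q ^ 4 * q ^ 2)) :=
    mul_le_mul_of_nonneg_left h2 (by positivity)
  have e : 1 / (2 * q ^ 3) * (2 * B ^ 2 * (q ^ 4 * q ^ 2)) = B ^ 2 * q ^ 3 := by
    field_simp
  have : 0 < q ^ 3 := by positivity
  linarith

/-! ### Taylor estimates and the normalization -/

lemma norm_exp_taylor_le (y : ℝ) :
    ‖Complex.exp (y * Complex.I) - (1 + y * Complex.I - (y : ℂ) ^ 2 / 2)‖ ≤ 4 * |y| ^ 3 := by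
  rcases le_or_gt |y| 1 with hy | hy
  · have h := Complex.exp_bound (x := y * Complex.I) (by simpa using hy) (n := 3) (by norm_num)
    have e : ∑ k ∈ Finset.range 3, (y * Complex.I) ^ k / (k.factorial : ℂ)
        = 1 + y * Complex.I - (y : ℂ) ^ 2 / 2 := by
      simp [Finset.sum_range_succ, mul_pow]
      ring
    rw [e] at h
    refine h.trans ?_
    simp [Nat.factorial]
    nlinarith [pow_nonneg (abs_nonneg y) 3]
  · have h1 : ‖Complex.exp (y * Complex.I)‖ = 1 := Complex.norm_exp_ofReal_mul_I y
    have h2 : ‖(1 + y * Complex.I - (y : ℂ) ^ 2 / 2)‖ ≤ 1 + |y| + |y| ^ 2 / 2 := by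
      refine (norm_sub_le _ _).trans (add_le_add ((norm_add_le _ _).trans ?_) ?_)
      · simp
      · simp
    refine (norm_sub_le _ _).trans ?_
    have h3 : |y| ≤ |y| ^ 2 := by nlinarith
    have h4 : |y| ^ 2 ≤ |y| ^ 3 := by nlinarith [sq_nonneg |y|]
    linarith

lemma abs_exp_neg_taylor_le {y : ℝ} (hy : 0 ≤ y) : |1 - y - Real.exp (-y)| ≤ y ^ 2 := by
  rcases le_or_gt y 1 with h1 | h1
  · have := Real.norm_exp_sub_one_sub_id_le (x := -y) (by simpa [abs_of_nonneg hy] using h1)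
    rw [Real.norm_eq_abs, Real.norm_eq_abs] at this
    rw [show 1 - y - Real.exp (-y) = -(Real.exp (-y) - 1 - -y) by ring, abs_neg]
    simpa using this
  · have h2 : Real.exp (-y) ≤ 1 := Real.exp_le_one_iff.2 (by linarith)
    have h3 := Real.exp_pos (-y)
    rw [abs_le]
    constructor <;> nlinarith

/-- Elementary estimates for `δ = n^{-1/2} - (n+1)^{-1/2}` and `b = (n+1)^{-1/2}`, written in terms
of `q = n^{1/4}`. The last one says that the drift `b / (2n)` of the normalized score compensates
the change `δ` of the normalization up to `O(n^{-5/2})`. -/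
lemma normalization_bounds {q b δ : ℝ} (hq : 1 ≤ q) (hb : b = 1 / √(q ^ 4 + 1))
    (hδ : δ = 1 / q ^ 2 - b) :
    0 < b ∧ b ≤ 1 / q ^ 2 ∧ b ^ 2 = 1 / (q ^ 4 + 1) ∧ 0 ≤ δ ∧ δ ≤ 1 / q ^ 6 ∧
      |b / (2 * q ^ 4) - δ| ≤ 1 / q ^ 10 := by
  have hq0 : 0 < q := by linarith
  set r := √(q ^ 4 + 1) with hrdef
  have hr : r ^ 2 = q ^ 4 + 1 := Real.sq_sqrt (by positivity)
  have hr0 : 0 < r := Real.sqrt_pos.2 (by positivity)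
  have hqr : q ^ 2 ≤ r := Real.le_sqrt_of_sq_le (by nlinarith)
  set e := r - q ^ 2 with he
  have he0 : 0 ≤ e := by linarith
  have hprod : e * (e + 2 * q ^ 2) = 1 := by rw [he]; nlinarith
  have he1 : e ≤ 1 / (2 * q ^ 2) := by
    rw [le_div_iff₀ (by positivity)]
    nlinarith [sq_nonneg e]
  have hbq : b ≤ 1 / q ^ 2 := by
    rw [hb]
    exact one_div_le_one_div_of_le (by positivity) hqr
  have hδe : δ = b * (e / q ^ 2) := by
    rw [hδ, hb, he]
    field_simp
  have hb0 : 0 < b := by rw [hb]; positivity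
  have heq : e / q ^ 2 ≤ 1 / (2 * q ^ 4) := by
    calc e / q ^ 2 ≤ (1 / (2 * q ^ 2)) / q ^ 2 := by gcongr
      _ = 1 / (2 * q ^ 4) := by field_simp
  refine ⟨hb0, hbq, ?_, ?_, ?_, ?_⟩
  · rw [hb, div_pow, hr, one_pow]
  · rw [hδe]; positivity
  · rw [hδe]
    calc b * (e / q ^ 2) ≤ 1 / q ^ 2 * (1 / (2 * q ^ 4)) := by gcongr
      _ = 1 / q ^ 6 / 2 := by field_simp
      _ ≤ 1 / q ^ 6 := by
        have : 0 < 1 / q ^ 6 := by positivity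
        linarith
  · have e1 : b / (2 * q ^ 4) - δ = b * ((e / q ^ 2) * e) / (2 * q ^ 2) := by
      rw [hδe]
      field_simp
      nlinarith
    have he1' : e ≤ 1 / q ^ 2 := he1.trans (by
      rw [div_le_div_iff₀ (by positivity) (by positivity)]
      nlinarith [sq_nonneg q])
    rw [e1, abs_of_nonneg (by positivity)]
    calc b * ((e / q ^ 2) * e) / (2 * q ^ 2)
        ≤ 1 / q ^ 2 * ((1 / (2 * q ^ 4)) * (1 / q ^ 2)) / (2 * q ^ 2) := by gcongr
      _ = 1 / q ^ 10 / 4 := by field_simp; norm_num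
      _ ≤ 1 / q ^ 10 := by
        have : 0 < 1 / q ^ 10 := by positivity
        linarith

/-! ### One step of the characteristic function -/

/-- The characteristic function at `s` of the normalized score `X_n / √n`. -/
def normCharFun (μ : Measure Ω) (x : Fin m → ℝ) (ξ : ℕ → Ω → Fin m) (n : ℕ) (s : ℝ) : ℂ :=
  ∫ ω, Complex.exp ((s * (score x ξ n ω / √n) : ℝ) * Complex.I) ∂μ

/-- Uniform variance of the weight `x` (when `x` is centered). -/
def unifVar (x : Fin m → ℝ) : ℝ := (m : ℝ)⁻¹ * ∑ i, x i ^ 2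

/-- The explicit constant in `norm_normCharFun_step_le`. -/
def stepConst (B : ℝ) : ℝ := 32 * B ^ 3 + B + (B ^ 4 + 1 + 5 * B ^ 2) + B ^ 4

set_option maxHeartbeats 1000000 in
/-- One step of the walk multiplies the characteristic function of `X_n / √n` by
`exp (-s² σ² / (2n))`, up to `O(|s| n^{-5/4})`. -/
lemma norm_normCharFun_step_le [IsProbabilityMeasure μ] (h : IsCriticalSeq μ ξ)
    {x : Fin m → ℝ} (hx : ∑ i, x i = 0) {B : ℝ} (hB : ∀ i, |x i| ≤ B) {n : ℕ} (hn : 1 ≤ n)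
    {q : ℝ} (hq1 : 1 ≤ q) (hqn : q ^ 4 = n) {s : ℝ} (hs : |s| ≤ 1) :
    ‖normCharFun μ x ξ (n + 1) s
        - (Real.exp (-(s ^ 2 * unifVar x / (2 * n))) : ℂ) * normCharFun μ x ξ n s‖
      ≤ stepConst B * |s| / q ^ 5 := by
  have hm : 0 < m := by have := h.two_le; omega
  have hmR : (0 : ℝ) < m := by exact_mod_cast hm
  have hB0 : 0 ≤ B := (abs_nonneg _).trans (hB ⟨0, hm⟩)
  have hq0 : 0 < q := by linarith
  have hxsq : ∀ i, x i ^ 2 ≤ B ^ 2 := fun i => sq_le_sq' (abs_le.1 (hB i)).1 (abs_le.1 (hB i)).2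
  set σ2 := unifVar x with hσ2
  have hσ0 : 0 ≤ σ2 := by
    rw [hσ2, unifVar]
    exact mul_nonneg (by positivity) (Finset.sum_nonneg fun i _ => sq_nonneg _)
  have hσB : σ2 ≤ B ^ 2 := by
    rw [hσ2, unifVar, inv_mul_le_iff₀ hmR]
    refine (Finset.sum_le_sum fun i _ => hxsq i).trans ?_
    simp
  -- the centered squares: their score measures how far the conditional variance is from `σ²`
  set z : Fin m → ℝ := fun i => x i ^ 2 - σ2 with hz
  have hzsum : ∑ i, z i = 0 := by
    simp only [hz, Finset.sum_sub_distrib, Finset.sum_const, Finset.card_univ, Fintype.card_fin,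
      nsmul_eq_mul, hσ2, unifVar]
    field_simp
    ring
  have hzB : ∀ i, |z i| ≤ B ^ 2 := fun i => by
    simp only [hz, abs_le]
    constructor <;> nlinarith [hxsq i, sq_nonneg (x i)]
  obtain ⟨b, hb⟩ : ∃ b, b = 1 / √(q ^ 4 + 1) := ⟨_, rfl⟩
  obtain ⟨δ, hδ⟩ : ∃ δ, δ = 1 / q ^ 2 - b := ⟨_, rfl⟩
  obtain ⟨hb0, hbq, hbsq, hδ0, hδq, hdrift⟩ := normalization_bounds hq1 hb hδ
  have hsqrt : √(n : ℝ) = q ^ 2 := by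
    rw [← hqn, show q ^ 4 = (q ^ 2) ^ 2 by ring, Real.sqrt_sq (by positivity)]
  have hX := measurable_score' h.meas x n
  have hx' := measurable_step' h.meas x (n + 1)
  have hz' := measurable_step' h.meas z (n + 1)
  have hXle : ∀ ω, |score x ξ n ω| ≤ n * B := fun ω => abs_score_le hB n ω
  have hX2 := integral_score_sq_le h hx hB hn
  rw [hsqrt, ← hqn] at hX2
  have hZ1 := integral_abs_score_le h hzsum hzB hn hq0 hqn
  set W : Ω → ℂ := fun ω => Complex.exp ((s * (score x ξ n ω / √n) : ℝ) * Complex.I) with hW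
  have hW1 : ∀ ω, ‖W ω‖ = 1 := fun ω => Complex.norm_exp_ofReal_mul_I _
  have hWF : StronglyMeasurable[stepFiltration ξ n] W := by
    have hg : Measurable fun y : ℝ => Complex.exp ((s * (y / √n) : ℝ) * Complex.I) := by fun_prop
    exact (hg.comp (measurable_score x n)).stronglyMeasurable
  have hWm : Measurable W := (hWF.mono (stepFiltration_le h.meas n)).measurable
  have hI : ∀ (g : Ω → ℝ) (K : ℝ), Measurable g → (∀ ω, |g ω| ≤ K) →
      Integrable (fun ω => g ω • W ω) μ := fun g K hg hK =>
    Integrable.of_bound (hg.smul hWm).aestronglyMeasurable K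
      (Eventually.of_forall fun ω => by
        rw [norm_smul, hW1, mul_one]
        exact hK ω)
  have hWI : Integrable W μ :=
    Integrable.of_bound hWm.aestronglyMeasurable 1 (Eventually.of_forall fun ω => (hW1 ω).le)
  have hxI := hI (fun ω => x (ξ (n + 1) ω)) B hx' fun ω => hB _
  have hXI := hI (score x ξ n) _ hX hXle
  have hzI := hI (fun ω => z (ξ (n + 1) ω)) _ hz' fun ω => hzB _
  have hxXI := hI (fun ω => x (ξ (n + 1) ω) * score x ξ n ω) (B * (n * B)) (hx'.mul hX) fun ω => by
    rw [abs_mul]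
    exact mul_le_mul (hB _) (hXle ω) (abs_nonneg _) hB0
  have hXXI := hI (fun ω => score x ξ n ω ^ 2) ((n * B) ^ 2) (hX.pow_const 2) fun ω => by
    rw [abs_pow]
    exact pow_le_pow_left₀ (abs_nonneg _) (hXle ω) 2
  -- the increment of the normalized score
  set D : Ω → ℝ := fun ω => b * x (ξ (n + 1) ω) - δ * score x ξ n ω with hD
  have hDle : ∀ ω, |D ω| ≤ 2 * B / q ^ 2 := fun ω => by
    have h1 : |b * x (ξ (n + 1) ω)| ≤ 1 / q ^ 2 * B := by
      rw [abs_mul, abs_of_pos hb0]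
      exact mul_le_mul hbq (hB _) (abs_nonneg _) (by positivity)
    have h2 : |δ * score x ξ n ω| ≤ 1 / q ^ 6 * (q ^ 4 * B) := by
      rw [abs_mul, abs_of_nonneg hδ0]
      refine mul_le_mul hδq ?_ (abs_nonneg _) (by positivity)
      rw [hqn]
      exact hXle ω
    refine (abs_sub _ _).trans ((add_le_add h1 h2).trans (le_of_eq ?_))
    field_simp
    ring
  have hDm : Measurable D := (hx'.const_mul b).sub (hX.const_mul δ)
  have hDI := hI D _ hDm hDle
  have hDDI := hI (fun ω => D ω ^ 2) ((2 * B / q ^ 2) ^ 2) (hDm.pow_const 2) fun ω => by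
    rw [abs_pow]
    exact pow_le_pow_left₀ (abs_nonneg _) (hDle ω) 2
  have hnext : ∀ ω, Complex.exp ((s * (score x ξ (n + 1) ω / √((n + 1 : ℕ) : ℝ)) : ℝ) * Complex.I)
      = Complex.exp ((s * D ω : ℝ) * Complex.I) * W ω := fun ω => by
    rw [hW, ← Complex.exp_add]
    congr 1
    rw [← add_mul, ← Complex.ofReal_add, ← mul_add, score_succ]
    congr 4
    rw [hsqrt, hD]
    push_cast
    rw [← hqn]
    simp only [hδ, hb]
    ring
  -- `R` is the third-order Taylor remainder of `exp (i s D)`, times `W`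
  set R : Ω → ℂ := fun ω => (Complex.exp ((s * D ω : ℝ) * Complex.I)
    - (1 + (s * D ω : ℝ) * Complex.I - ((s * D ω : ℝ) : ℂ) ^ 2 / 2)) * W ω with hR
  have hRle : ∀ ω, ‖R ω‖ ≤ 32 * B ^ 3 * |s| / q ^ 5 := fun ω => by
    rw [hR, norm_mul, hW1, mul_one]
    refine (norm_exp_taylor_le _).trans ?_
    rw [abs_mul, mul_pow]
    have h1 : |s| ^ 3 ≤ |s| := by
      have := pow_le_pow_of_le_one (abs_nonneg s) hs (show 1 ≤ 3 by norm_num)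
      simpa using this
    have h2 : |D ω| ^ 3 ≤ 8 * B ^ 3 / q ^ 5 := by
      refine (pow_le_pow_left₀ (abs_nonneg _) (hDle ω) 3).trans ?_
      rw [div_pow, mul_pow, ← pow_mul]
      norm_num
      gcongr
      norm_num
    calc 4 * (|s| ^ 3 * |D ω| ^ 3) ≤ 4 * (|s| * (8 * B ^ 3 / q ^ 5)) := by gcongr
      _ = 32 * B ^ 3 * |s| / q ^ 5 := by ring
  have hRm : Measurable R := by
    have : Measurable fun y : ℝ => (Complex.exp ((s * y : ℝ) * Complex.I)
      - (1 + (s * y : ℝ) * Complex.I - ((s * y : ℝ) : ℂ) ^ 2 / 2)) := by fun_prop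
    exact (this.comp hDm).mul hWm
  have hRI : Integrable R μ :=
    Integrable.of_bound hRm.aestronglyMeasurable _ (Eventually.of_forall hRle)
  set v := s ^ 2 * σ2 / (2 * n) with hv
  have hv0 : 0 ≤ v := by positivity
  set J0 := ∫ ω, W ω ∂μ with hJ0
  set J1 := ∫ ω, R ω ∂μ with hJ1
  set J2 := ∫ ω, D ω • W ω ∂μ with hJ2
  set J3 := ∫ ω, (D ω ^ 2) • W ω ∂μ - (σ2 / n) • J0 with hJ3
  have hdecomp : normCharFun μ x ξ (n + 1) s - (Real.exp (-v) : ℂ) * normCharFun μ x ξ n s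
      = J1 + ((s : ℂ) * Complex.I) * J2 - (s ^ 2 / 2 : ℝ) • J3
        + (1 - v - Real.exp (-v) : ℝ) • J0 := by
    have e1 : normCharFun μ x ξ (n + 1) s
        = J1 + J0 + ((s : ℂ) * Complex.I) * J2 - (s ^ 2 / 2 : ℝ) • ∫ ω, (D ω ^ 2) • W ω ∂μ := by
      rw [hJ1, hJ0, hJ2, ← integral_const_mul, ← integral_smul, ← integral_add hRI hWI,
        ← integral_add (hRI.fun_add hWI) (hDI.const_mul _),
        ← integral_sub ((hRI.fun_add hWI).fun_add (hDI.const_mul _)) (hDDI.fun_smul _)]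
      refine integral_congr_ae (Eventually.of_forall fun ω => ?_)
      simp only [hnext, hR, Complex.real_smul]
      push_cast
      ring
    have e2 : normCharFun μ x ξ n s = J0 := rfl
    rw [e1, e2, hJ3, hv]
    simp only [Complex.real_smul]
    push_cast
    ring
  have hJ0le : ‖J0‖ ≤ 1 := by
    refine (norm_integral_le_of_norm_le_const (C := 1)
      (Eventually.of_forall fun ω => (hW1 ω).le)).trans ?_
    simp
  have hJ1le : ‖J1‖ ≤ 32 * B ^ 3 * |s| / q ^ 5 := by
    refine (norm_integral_le_of_norm_le_const (Eventually.of_forall hRle)).trans ?_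
    simp
  have hqpow : ∀ k, 5 ≤ k → 1 / q ^ k ≤ 1 / q ^ 5 := fun k hk =>
    one_div_le_one_div_of_le (by positivity) (pow_le_pow_right₀ hq1 hk)
  have hJ2le : ‖J2‖ ≤ B / q ^ 5 := by
    have e : J2 = (b / (2 * q ^ 4) - δ) • ∫ ω, score x ξ n ω • W ω ∂μ := by
      have h1 := integral_step_smul h hx hn hWF (fun ω => (hW1 ω).le)
      have h2 : J2 = b • ∫ ω, x (ξ (n + 1) ω) • W ω ∂μ - δ • ∫ ω, score x ξ n ω • W ω ∂μ := by
        rw [hJ2, ← integral_smul, ← integral_smul,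
          ← integral_sub (hxI.fun_smul b) (hXI.fun_smul δ)]
        refine integral_congr_ae (Eventually.of_forall fun ω => ?_)
        simp only [hD, sub_smul, mul_smul]
      rw [h2, h1, smul_smul, ← sub_smul, hqn]
      congr 2
      ring
    have h3 : ‖∫ ω, score x ξ n ω • W ω ∂μ‖ ≤ q ^ 4 * B := by
      refine (norm_integral_le_of_norm_le_const (C := q ^ 4 * B)
        (Eventually.of_forall fun ω => ?_)).trans (by simp)
      rw [norm_smul, hW1, mul_one, hqn]
      exact hXle ω
    rw [e, norm_smul, Real.norm_eq_abs]
    calc |b / (2 * q ^ 4) - δ| * ‖∫ ω, score x ξ n ω • W ω ∂μ‖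
        ≤ 1 / q ^ 10 * (q ^ 4 * B) := mul_le_mul hdrift h3 (norm_nonneg _) (by positivity)
      _ = B * (1 / q ^ 6) := by field_simp
      _ ≤ B * (1 / q ^ 5) := mul_le_mul_of_nonneg_left (hqpow 6 (by norm_num)) hB0
      _ = B / q ^ 5 := by ring
  have hJ3le : ‖J3‖ ≤ (B ^ 4 + 1 + 5 * B ^ 2) / q ^ 5 := by
    set A1 := ∫ ω, score z ξ n ω • W ω ∂μ with hA1
    set A2 := ∫ ω, (score x ξ n ω ^ 2) • W ω ∂μ with hA2
    have hz1 := integral_step_smul h hzsum hn hWF (fun ω => (hW1 ω).le)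
    have hx1 := integral_step_smul h hx hn (W := fun ω => score x ξ n ω • W ω) (K := n * B)
      ((measurable_score x n).stronglyMeasurable.smul hWF) (fun ω => by
        rw [norm_smul, hW1, mul_one]
        exact hXle ω)
    have e : J3 = (b ^ 2 * (1 / (2 * q ^ 4))) • A1 - (σ2 * (1 / q ^ 4 - b ^ 2)) • J0
        - (2 * b * δ * (1 / (2 * q ^ 4))) • A2 + (δ ^ 2) • A2 := by
      have h1 : ∫ ω, (D ω ^ 2) • W ω ∂μ = (b ^ 2) • ∫ ω, z (ξ (n + 1) ω) • W ω ∂μ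
          + (b ^ 2 * σ2) • J0 + (-(2 * b * δ)) • ∫ ω, (x (ξ (n + 1) ω) * score x ξ n ω) • W ω ∂μ
          + (δ ^ 2) • A2 := by
        rw [hA2, hJ0, ← integral_smul, ← integral_smul, ← integral_smul, ← integral_smul,
          ← integral_add (hzI.fun_smul _) (hWI.fun_smul _),
          ← integral_add ((hzI.fun_smul _).fun_add (hWI.fun_smul _)) (hxXI.fun_smul _),
          ← integral_add (((hzI.fun_smul _).fun_add (hWI.fun_smul _)).fun_add (hxXI.fun_smul _))
            (hXXI.fun_smul _)]
        refine integral_congr_ae (Eventually.of_forall fun ω => ?_)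
        simp only [hD, hz, Complex.real_smul]
        push_cast
        ring
      have hx2 : ∫ ω, (x (ξ (n + 1) ω) * score x ξ n ω) • W ω ∂μ = (1 / (2 * (n : ℝ))) • A2 := by
        simp only [mul_smul]
        rw [hx1, hA2]
        simp only [sq, mul_smul]
      rw [hJ3, h1, hx2, hz1, ← hA1, ← hqn]
      simp only [Complex.real_smul]
      push_cast
      ring
    have hA1le : ‖A1‖ ≤ (B ^ 4 + 1) * q ^ 3 := by
      refine (norm_integral_le_integral_norm _).trans ?_
      simp only [norm_smul, hW1, mul_one, Real.norm_eq_abs]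
      refine hZ1.trans (le_of_eq ?_)
      ring
    have hA2le : ‖A2‖ ≤ 2 * B ^ 2 * q ^ 6 := by
      refine (norm_integral_le_integral_norm _).trans ?_
      simp only [norm_smul, hW1, mul_one, Real.norm_eq_abs, abs_pow, sq_abs]
      refine hX2.trans (le_of_eq ?_)
      ring
    have hb2 : b ^ 2 ≤ 1 / q ^ 4 := by
      rw [hbsq]
      exact one_div_le_one_div_of_le (by positivity) (by linarith)
    have hb3 : 1 / q ^ 4 - b ^ 2 ≤ 1 / q ^ 8 := by
      rw [hbsq, div_sub_div _ _ (by positivity) (by positivity),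
        div_le_div_iff₀ (by positivity) (by positivity)]
      nlinarith [pow_pos hq0 4]
    have t1 : ‖(b ^ 2 * (1 / (2 * q ^ 4))) • A1‖ ≤ (B ^ 4 + 1) * (1 / q ^ 5) := by
      rw [norm_smul, Real.norm_eq_abs, abs_of_nonneg (by positivity)]
      calc b ^ 2 * (1 / (2 * q ^ 4)) * ‖A1‖
          ≤ 1 / q ^ 4 * (1 / (2 * q ^ 4)) * ((B ^ 4 + 1) * q ^ 3) := by gcongr
        _ = (B ^ 4 + 1) * (1 / q ^ 5) / 2 := by field_simp
        _ ≤ (B ^ 4 + 1) * (1 / q ^ 5) := half_le_self (by positivity)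
    have t2 : ‖(σ2 * (1 / q ^ 4 - b ^ 2)) • J0‖ ≤ B ^ 2 * (1 / q ^ 5) := by
      have h0 : 0 ≤ 1 / q ^ 4 - b ^ 2 := by linarith
      rw [norm_smul, Real.norm_eq_abs, abs_of_nonneg (mul_nonneg hσ0 h0)]
      calc σ2 * (1 / q ^ 4 - b ^ 2) * ‖J0‖ ≤ B ^ 2 * (1 / q ^ 8) * 1 := by gcongr
        _ ≤ B ^ 2 * (1 / q ^ 5) * 1 := by gcongr ?_ * ?_ * _; exact hqpow 8 (by norm_num)
        _ = B ^ 2 * (1 / q ^ 5) := mul_one _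
    have t3 : ‖(2 * b * δ * (1 / (2 * q ^ 4))) • A2‖ ≤ 2 * B ^ 2 * (1 / q ^ 5) := by
      rw [norm_smul, Real.norm_eq_abs, abs_of_nonneg (by positivity)]
      calc 2 * b * δ * (1 / (2 * q ^ 4)) * ‖A2‖
          ≤ 2 * (1 / q ^ 2) * (1 / q ^ 6) * (1 / (2 * q ^ 4)) * (2 * B ^ 2 * q ^ 6) := by gcongr
        _ = 2 * B ^ 2 * (1 / q ^ 6) := by field_simp
        _ ≤ 2 * B ^ 2 * (1 / q ^ 5) := by gcongr ?_ * ?_; exact hqpow 6 (by norm_num)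
    have t4 : ‖(δ ^ 2) • A2‖ ≤ 2 * B ^ 2 * (1 / q ^ 5) := by
      rw [norm_smul, Real.norm_eq_abs, abs_of_nonneg (by positivity)]
      calc δ ^ 2 * ‖A2‖ ≤ (1 / q ^ 6) ^ 2 * (2 * B ^ 2 * q ^ 6) := by gcongr
        _ = 2 * B ^ 2 * (1 / q ^ 6) := by field_simp
        _ ≤ 2 * B ^ 2 * (1 / q ^ 5) := by gcongr ?_ * ?_; exact hqpow 6 (by norm_num)
    rw [e]
    refine (norm_add_le _ _).trans ?_
    refine (add_le_add ((norm_sub_le _ _).trans (add_le_add ((norm_sub_le _ _).trans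
      (add_le_add t1 t2)) t3)) t4).trans (le_of_eq ?_)
    ring
  have hs2 : s ^ 2 ≤ |s| := by
    rw [← sq_abs, sq]
    exact mul_le_of_le_one_left (abs_nonneg s) hs
  have t2 : ‖((s : ℂ) * Complex.I) * J2‖ ≤ |s| * (B / q ^ 5) := by
    rw [norm_mul]
    simp only [norm_mul, Complex.norm_I, mul_one, Complex.norm_real, Real.norm_eq_abs]
    gcongr
  have t3 : ‖(s ^ 2 / 2 : ℝ) • J3‖ ≤ |s| * ((B ^ 4 + 1 + 5 * B ^ 2) / q ^ 5) := by
    rw [norm_smul, Real.norm_eq_abs, abs_of_nonneg (by positivity)]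
    refine mul_le_mul ?_ hJ3le (norm_nonneg _) (abs_nonneg _)
    linarith [sq_nonneg s]
  have t4 : ‖(1 - v - Real.exp (-v) : ℝ) • J0‖ ≤ |s| * (B ^ 4 / q ^ 5) := by
    rw [norm_smul, Real.norm_eq_abs]
    have hvle : v ≤ |s| * B ^ 2 / q ^ 4 := by
      rw [hv, ← hqn]
      have h1 : s ^ 2 * σ2 ≤ |s| * B ^ 2 := mul_le_mul hs2 hσB hσ0 (abs_nonneg _)
      have h2 : q ^ 4 ≤ 2 * q ^ 4 := by nlinarith [pow_pos hq0 4]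
      gcongr
    calc |1 - v - Real.exp (-v)| * ‖J0‖ ≤ v ^ 2 * 1 :=
          mul_le_mul (abs_exp_neg_taylor_le hv0) hJ0le (norm_nonneg _) (sq_nonneg _)
      _ ≤ (|s| * B ^ 2 / q ^ 4) ^ 2 * 1 := by gcongr
      _ = s ^ 2 * (B ^ 4 * (1 / q ^ 8)) := by rw [← sq_abs s]; field_simp
      _ ≤ |s| * (B ^ 4 * (1 / q ^ 5)) := by
          refine mul_le_mul hs2 (mul_le_mul_of_nonneg_left (hqpow 8 (by norm_num)) (by positivity))
            (by positivity) (abs_nonneg _)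
      _ = |s| * (B ^ 4 / q ^ 5) := by ring
  rw [hdecomp]
  refine (norm_add_le _ _).trans ?_
  refine (add_le_add ((norm_sub_le _ _).trans (add_le_add ((norm_add_le _ _).trans
    (add_le_add hJ1le t2)) t3)) t4).trans (le_of_eq ?_)
  rw [stepConst]
  ring

/-! ### Iteration and the scalar limit -/

/-- The sum of the series `∑ n^{-5/4}` that controls the accumulated one-step errors. -/
def errSum : ℝ := ∑' j : ℕ, 1 / (((j : ℝ) + 1) ^ (1 / 4 : ℝ)) ^ 5

lemma summable_err : Summable fun j : ℕ => 1 / (((j : ℝ) + 1) ^ (1 / 4 : ℝ)) ^ 5 := by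
  have h := (summable_nat_add_iff 1).2
    (Real.summable_one_div_nat_rpow.2 (show (1 : ℝ) < 5 / 4 by norm_num))
  refine h.congr fun j => ?_
  rw [← Real.rpow_natCast, ← Real.rpow_mul (by positivity)]
  norm_num

/-- Uniform Gaussian approximation: iterating the one-step estimate gives, for `|s| ≤ 1`, an error
`O(|s|)` that does not depend on the number of steps. -/
lemma norm_normCharFun_sub_le [IsProbabilityMeasure μ] (h : IsCriticalSeq μ ξ)
    {x : Fin m → ℝ} (hx : ∑ i, x i = 0) {B : ℝ} (hB : ∀ i, |x i| ≤ B) (k : ℕ)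
    {s : ℝ} (hs : |s| ≤ 1) :
    ‖normCharFun μ x ξ (k + 1) s - (Real.exp (-(s ^ 2 * unifVar x * harmonic k / 2)) : ℂ)‖
      ≤ (B + stepConst B * errSum) * |s| := by
  have hB0 : 0 ≤ B := (abs_nonneg _).trans (hB ⟨0, by have := h.two_le; omega⟩)
  have hC : 0 ≤ stepConst B := by unfold stepConst; positivity
  have hσ0 : 0 ≤ unifVar x :=
    mul_nonneg (by positivity) (Finset.sum_nonneg fun i _ => sq_nonneg _)
  have hmain : ‖normCharFun μ x ξ (k + 1) s
      - (Real.exp (-(s ^ 2 * unifVar x * harmonic k / 2)) : ℂ)‖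
      ≤ B * |s| + ∑ j ∈ Finset.range k,
        stepConst B * |s| * (1 / (((j : ℝ) + 1) ^ (1 / 4 : ℝ)) ^ 5) := by
    induction k with
    | zero =>
      have hm1 := measurable_score' h.meas x 1
      have hg : Measurable fun y : ℝ =>
        Complex.exp ((s * (y / √((0 + 1 : ℕ) : ℝ)) : ℝ) * Complex.I) := by fun_prop
      have hint : Integrable (fun ω =>
          Complex.exp ((s * (score x ξ (0 + 1) ω / √((0 + 1 : ℕ) : ℝ)) : ℝ) * Complex.I)) μ :=
        Integrable.of_bound (hg.comp hm1).aestronglyMeasurable 1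
          (Eventually.of_forall fun ω => (Complex.norm_exp_ofReal_mul_I _).le)
      have e : normCharFun μ x ξ (0 + 1) s
          - (Real.exp (-(s ^ 2 * unifVar x * harmonic 0 / 2)) : ℂ)
          = ∫ ω, (Complex.exp ((s * (score x ξ (0 + 1) ω / √((0 + 1 : ℕ) : ℝ)) : ℝ) * Complex.I)
              - 1) ∂μ := by
        rw [integral_sub hint (integrable_const _)]
        simp [normCharFun]
      rw [e]
      refine (norm_integral_le_of_norm_le_const (C := B * |s|)
        (Eventually.of_forall fun ω => ?_)).trans (by simp)
      rw [mul_comm _ Complex.I]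
      refine Real.norm_exp_I_mul_ofReal_sub_one_le.trans ?_
      have := abs_score_le (ξ := ξ) hB 1 ω
      simp only [Nat.cast_one, one_mul] at this
      simp only [zero_add, Nat.cast_one, Real.sqrt_one, div_one, norm_mul, Real.norm_eq_abs]
      rw [mul_comm]
      exact mul_le_mul_of_nonneg_right this (abs_nonneg _)
    | succ k ih =>
      have hq1 : 1 ≤ ((k : ℝ) + 1) ^ (1 / 4 : ℝ) := Real.one_le_rpow (by
        have : (0 : ℝ) ≤ k := Nat.cast_nonneg k
        linarith) (by norm_num)
      have hqn : (((k : ℝ) + 1) ^ (1 / 4 : ℝ)) ^ 4 = ((k + 1 : ℕ) : ℝ) := by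
        rw [← Real.rpow_natCast, ← Real.rpow_mul (by positivity)]
        norm_num
      have hstep := norm_normCharFun_step_le h hx hB (n := k + 1) (by omega) hq1 hqn hs
      set c := Real.exp (-(s ^ 2 * unifVar x / (2 * ((k + 1 : ℕ) : ℝ)))) with hc
      have hc1 : c ≤ 1 := Real.exp_le_one_iff.2 (by
        have : 0 ≤ s ^ 2 * unifVar x / (2 * ((k + 1 : ℕ) : ℝ)) := by positivity
        linarith)
      have hc0 : 0 < c := Real.exp_pos _
      have hexp : Real.exp (-(s ^ 2 * unifVar x * (harmonic (k + 1) : ℚ) / 2))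
          = c * Real.exp (-(s ^ 2 * unifVar x * (harmonic k : ℚ) / 2)) := by
        rw [hc, ← Real.exp_add, harmonic_succ]
        congr 1
        push_cast
        field_simp
        ring
      rw [Finset.sum_range_succ, hexp]
      set E := Real.exp (-(s ^ 2 * unifVar x * (harmonic k : ℚ) / 2))
      have e : normCharFun μ x ξ (k + 1 + 1) s - ((c * E : ℝ) : ℂ)
          = (normCharFun μ x ξ (k + 1 + 1) s - (c : ℂ) * normCharFun μ x ξ (k + 1) s)
            + (c : ℂ) * (normCharFun μ x ξ (k + 1) s - (E : ℂ)) := by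
        push_cast
        ring
      rw [e]
      have h2 : ‖(c : ℂ) * (normCharFun μ x ξ (k + 1) s - (E : ℂ))‖
          ≤ ‖normCharFun μ x ξ (k + 1) s - (E : ℂ)‖ := by
        rw [norm_mul, Complex.norm_real, Real.norm_eq_abs, abs_of_pos hc0]
        exact mul_le_of_le_one_left (norm_nonneg _) hc1
      refine (norm_add_le _ _).trans ((add_le_add hstep (h2.trans ih)).trans (le_of_eq ?_))
      ring
  refine hmain.trans ?_
  rw [← Finset.mul_sum]
  have h3 : ∑ j ∈ Finset.range k, 1 / (((j : ℝ) + 1) ^ (1 / 4 : ℝ)) ^ 5 ≤ errSum :=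
    summable_err.sum_le_tsum _ fun j _ => by positivity
  have := mul_le_mul_of_nonneg_left h3 (mul_nonneg hC (abs_nonneg s))
  linarith

lemma tendsto_harmonic_div_log :
    Tendsto (fun k : ℕ => (harmonic k : ℝ) / Real.log ((k + 1 : ℕ) : ℝ)) atTop (𝓝 1) := by
  have hlog : Tendsto (fun k : ℕ => Real.log ((k + 1 : ℕ) : ℝ)) atTop atTop :=
    Real.tendsto_log_atTop.comp (tendsto_natCast_atTop_atTop.comp (tendsto_add_atTop_nat 1))
  have h1 := (Real.tendsto_harmonic_sub_log_add_one.div_atTop hlog).add_const 1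
  rw [zero_add] at h1
  refine h1.congr' ?_
  filter_upwards [hlog.eventually_gt_atTop 0] with k hk
  push_cast at hk ⊢
  field_simp
  ring

/-- The one-dimensional critical central limit theorem for a single centered score, in terms of
characteristic functions. -/
lemma tendsto_integral_exp_score [IsProbabilityMeasure μ] (h : IsCriticalSeq μ ξ)
    {x : Fin m → ℝ} (hx : ∑ i, x i = 0) :
    Tendsto (fun n : ℕ => ∫ ω, Complex.exp
        (((Real.sqrt ((n : ℝ) * Real.log n))⁻¹ * score x ξ n ω : ℝ) * Complex.I) ∂μ)
      atTop (𝓝 (Real.exp (-(unifVar x / 2)) : ℂ)) := by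
  obtain ⟨B, hB⟩ : ∃ B, ∀ i, |x i| ≤ B :=
    ⟨∑ i, |x i|, fun i => Finset.single_le_sum (f := fun i => |x i|)
      (fun i _ => abs_nonneg _) (Finset.mem_univ i)⟩
  have hlog : Tendsto (fun k : ℕ => Real.log ((k + 1 : ℕ) : ℝ)) atTop atTop :=
    Real.tendsto_log_atTop.comp (tendsto_natCast_atTop_atTop.comp (tendsto_add_atTop_nat 1))
  have hs : Tendsto (fun k : ℕ => (√(Real.log ((k + 1 : ℕ) : ℝ)))⁻¹) atTop (𝓝 0) :=
    tendsto_inv_atTop_zero.comp (Real.tendsto_sqrt_atTop.comp hlog)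
  rw [← tendsto_add_atTop_iff_nat 1]
  have hE : ∀ k : ℕ, ∫ ω, Complex.exp (((Real.sqrt (((k + 1 : ℕ) : ℝ) *
        Real.log ((k + 1 : ℕ) : ℝ)))⁻¹ * score x ξ (k + 1) ω : ℝ) * Complex.I) ∂μ
      = normCharFun μ x ξ (k + 1) (√(Real.log ((k + 1 : ℕ) : ℝ)))⁻¹ := by
    intro k
    unfold normCharFun
    congr 1
    ext ω
    congr 3
    rw [Real.sqrt_mul (Nat.cast_nonneg _), mul_inv]
    ring
  simp_rw [hE]
  have hexp : Tendsto (fun k : ℕ => (Real.exp (-((√(Real.log ((k + 1 : ℕ) : ℝ)))⁻¹ ^ 2 *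
      unifVar x * harmonic k / 2)) : ℂ)) atTop (𝓝 (Real.exp (-(unifVar x / 2)) : ℂ)) := by
    refine (Complex.continuous_ofReal.tendsto _).comp ?_
    refine (Real.continuous_exp.tendsto _).comp ?_
    have h1 := (tendsto_harmonic_div_log.const_mul (-(unifVar x / 2)))
    rw [mul_one] at h1
    refine h1.congr fun k => ?_
    rw [inv_pow, Real.sq_sqrt (Real.log_natCast_nonneg _)]
    ring
  have hdiff : Tendsto (fun k : ℕ => normCharFun μ x ξ (k + 1) (√(Real.log ((k + 1 : ℕ) : ℝ)))⁻¹
      - (Real.exp (-((√(Real.log ((k + 1 : ℕ) : ℝ)))⁻¹ ^ 2 *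
      unifVar x * harmonic k / 2)) : ℂ)) atTop (𝓝 0) := by
    have hb := (hs.abs.const_mul (B + stepConst B * errSum))
    rw [abs_zero, mul_zero] at hb
    refine squeeze_zero_norm' ?_ hb
    have hs1 : ∀ᶠ k : ℕ in atTop, |(√(Real.log ((k + 1 : ℕ) : ℝ)))⁻¹| < 1 := by
      have := hs.abs
      rw [abs_zero] at this
      exact this.eventually_lt_const one_pos
    filter_upwards [hs1] with k hk
    exact norm_normCharFun_sub_le h hx hB k hk.le
  have := hdiff.add hexp
  simpa using this

/-! ### Covariances and the Gaussian limit -/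

lemma sum_centered_eq_zero {d : ℕ} (hm : 2 ≤ m) (u : Fin m → Fin d → ℝ) {ub : Fin d → ℝ}
    (hub : ub = (m : ℝ)⁻¹ • ∑ i, u i) (l : Fin d → ℝ) : ∑ i, l ⬝ᵥ (u i - ub) = 0 := by
  have hmR : (m : ℝ) ≠ 0 := by
    have : m ≠ 0 := by omega
    exact_mod_cast this
  have h : ∑ i, (u i - ub) = 0 := by
    rw [Finset.sum_sub_distrib, Finset.sum_const, Finset.card_univ, Fintype.card_fin, hub,
      ← Nat.cast_smul_eq_nsmul ℝ, smul_smul, mul_inv_cancel₀ hmR, one_smul, sub_self]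
  rw [← dotProduct_sum, h, dotProduct_zero]

lemma dotProduct_cov_mulVec {d : ℕ} (c : Fin m → Fin d → ℝ) (l : Fin d → ℝ) :
    l ⬝ᵥ ((m : ℝ)⁻¹ • ∑ i, Matrix.vecMulVec (c i) (c i)).mulVec l
      = unifVar fun i => l ⬝ᵥ c i := by
  rw [Matrix.smul_mulVec, Matrix.sum_mulVec, dotProduct_smul, dotProduct_sum, unifVar, smul_eq_mul]
  congr 1
  refine Finset.sum_congr rfl fun i _ => ?_
  rw [Matrix.vecMulVec_mulVec, dotProduct_comm (c i) l]
  simp [sq]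

lemma posSemidef_cov {d : ℕ} (c : Fin m → Fin d → ℝ) :
    ((m : ℝ)⁻¹ • ∑ i, Matrix.vecMulVec (c i) (c i)).PosSemidef := by
  refine Matrix.PosSemidef.smul ?_ (by positivity)
  refine Matrix.posSemidef_sum _ fun i _ => ?_
  simpa using Matrix.posSemidef_vecMulVec_self_star (c i)

/-- The Gaussian measure of the statement, transported from Mathlib's `multivariateGaussian` on
Euclidean space. -/
lemma isCenteredGaussianCov_map {d : ℕ} {S : Matrix (Fin d) (Fin d) ℝ} (hS : S.PosSemidef) :
    IsCenteredGaussianCov ((multivariateGaussian 0 S).map (WithLp.ofLp)) S := by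
  have hm : Measurable (WithLp.ofLp : EuclideanSpace ℝ (Fin d) → Fin d → ℝ) := by fun_prop
  refine ⟨Measure.isProbabilityMeasure_map hm.aemeasurable, fun l => ?_⟩
  have hl : Measurable fun x : Fin d → ℝ => l ⬝ᵥ x := by
    unfold dotProduct
    fun_prop
  rw [Measure.map_map hl hm]
  have : IsProbabilityMeasure ((multivariateGaussian 0 S).map
      ((fun x : Fin d → ℝ => l ⬝ᵥ x) ∘ WithLp.ofLp)) :=
    Measure.isProbabilityMeasure_map (hl.comp hm).aemeasurable
  refine Measure.ext_of_charFun (funext fun t => ?_)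
  have hnn : 0 ≤ l ⬝ᵥ S *ᵥ l := by simpa using hS.dotProduct_mulVec_nonneg l
  have h1 := charFun_multivariateGaussian (μ := 0) hS (WithLp.toLp 2 (t • l))
  rw [charFun_gaussianReal, charFun_apply_real, integral_map (hl.comp hm).aemeasurable
    (by fun_prop)]
  rw [charFun_apply] at h1
  have e : ∀ x : EuclideanSpace ℝ (Fin d), inner ℝ x (WithLp.toLp 2 (t • l))
      = t * (l ⬝ᵥ WithLp.ofLp x) := fun x => by
    simp [EuclideanSpace.inner_eq_star_dotProduct]
  simp only [e] at h1
  simp only [Function.comp_apply]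
  push_cast at h1
  rw [h1]
  congr 1
  simp only [inner_zero_right, Complex.ofReal_zero, zero_mul, mul_zero,
    Matrix.mulVec_smul, dotProduct_smul, smul_dotProduct, smul_eq_mul, Real.coe_toNNReal _ hnn]
  push_cast
  ring

end

/-- **CLT in the critical regime for the Type-II ERW** (one-dimensional marginal):
if `m = m'` and `p = p_c^m = (m+1)/(2m)`, then `(S_{2n} - n(ū + w̄))/√(n log n)` converges
in distribution to the centered Gaussian on `ℝ^d` with covariance `Σ(U) + Σ(W)`. -/
theorem typeII_ERW_critical_clt
    {Ω : Type*} [MeasurableSpace Ω] (μ : Measure Ω) [IsProbabilityMeasure μ]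
    (d m m' : ℕ) (hm : 2 ≤ m) (hm' : 2 ≤ m') (hmm' : m = m')
    (u : Fin m → Fin d → ℝ) (hu : Function.Injective u)
    (w : Fin m' → Fin d → ℝ) (hw : Function.Injective w)
    (p : ℝ) (hp : p = ((m : ℝ) + 1) / (2 * m))
    (i0 : Fin m) (j0 : Fin m') (ξ : ℕ → Ω → Fin m) (η : ℕ → Ω → Fin m')
    (hERW : IsTypeIIERW μ m m' p i0 j0 ξ η)
    (ub wb : Fin d → ℝ) (hub : ub = (m : ℝ)⁻¹ • ∑ i, u i)
    (hwb : wb = (m' : ℝ)⁻¹ • ∑ j, w j)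
    (SigmaU SigmaW : Matrix (Fin d) (Fin d) ℝ)
    (hSigmaU : SigmaU = (m : ℝ)⁻¹ • ∑ i, Matrix.vecMulVec (u i - ub) (u i - ub))
    (hSigmaW : SigmaW = (m' : ℝ)⁻¹ • ∑ j, Matrix.vecMulVec (w j - wb) (w j - wb)) :
    ∃ ν : Measure (Fin d → ℝ), IsCenteredGaussianCov ν (SigmaU + SigmaW) ∧
      ∀ f : BoundedContinuousFunction (Fin d → ℝ) ℝ,
        Tendsto (fun n : ℕ => ∫ ω, f ((Real.sqrt ((n : ℝ) * Real.log n))⁻¹ •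
            (∑ k ∈ Finset.Icc 1 n, (u (ξ k ω) + w (η k ω)) - (n : ℝ) • (ub + wb))) ∂μ)
          atTop (𝓝 (∫ x, f x ∂ν)) := by
  subst hmm'
  subst hp
  have hξ : IsCriticalSeq μ ξ := ⟨hm, hERW.measurable_fst, hERW.cond_fst⟩
  have hη : IsCriticalSeq μ η := ⟨hm, hERW.measurable_snd, hERW.cond_snd⟩
  have hS : (SigmaU + SigmaW).PosSemidef := by
    rw [hSigmaU, hSigmaW]
    exact (posSemidef_cov _).add (posSemidef_cov _)
  refine ⟨_, isCenteredGaussianCov_map hS, fun f => ?_⟩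
  have hofLp : Measurable (WithLp.ofLp : EuclideanSpace ℝ (Fin d) → Fin d → ℝ) := by fun_prop
  -- the normalized walk as a random vector of Euclidean space
  let V : ℕ → Ω → EuclideanSpace ℝ (Fin d) := fun n ω => WithLp.toLp 2
    ((Real.sqrt ((n : ℝ) * Real.log n))⁻¹ •
      (∑ k ∈ Finset.Icc 1 n, (u (ξ k ω) + w (η k ω)) - (n : ℝ) • (ub + wb)))
  have hVm : ∀ n, Measurable (V n) := by
    intro n
    have h1 : ∀ k, Measurable fun ω => u (ξ k ω) := fun k =>
      (measurable_from_top (f := u)).comp (hERW.measurable_fst k)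
    have h2 : ∀ k, Measurable fun ω => w (η k ω) := fun k =>
      (measurable_from_top (f := w)).comp (hERW.measurable_snd k)
    have h3 : Measurable fun ω => ((Real.sqrt ((n : ℝ) * Real.log n))⁻¹ •
      (∑ k ∈ Finset.Icc 1 n, (u (ξ k ω) + w (η k ω)) - (n : ℝ) • (ub + wb))) := by
      have h4 : Measurable fun ω => ∑ k ∈ Finset.Icc 1 n, (u (ξ k ω) + w (η k ω)) :=
        Finset.measurable_sum _ fun k _ => (h1 k).add (h2 k)
      exact (h4.sub_const _).const_smul ((Real.sqrt ((n : ℝ) * Real.log n))⁻¹)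
    exact (by fun_prop : Measurable (WithLp.toLp 2 : (Fin d → ℝ) → EuclideanSpace ℝ (Fin d))).comp h3
  let P : ℕ → ProbabilityMeasure (EuclideanSpace ℝ (Fin d)) := fun n =>
    ⟨μ.map (V n), Measure.isProbabilityMeasure_map (hVm n).aemeasurable⟩
  let G : ProbabilityMeasure (EuclideanSpace ℝ (Fin d)) :=
    ⟨multivariateGaussian 0 (SigmaU + SigmaW), inferInstance⟩
  have hconv : Tendsto P atTop (𝓝 G) := by
    refine ProbabilityMeasure.tendsto_of_tendsto_charFun fun t => ?_
    set l : Fin d → ℝ := WithLp.ofLp t with hl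
    set x : Fin m → ℝ := fun i => l ⬝ᵥ (u i - ub) with hx
    set y : Fin m → ℝ := fun j => l ⬝ᵥ (w j - wb) with hy
    have hG : charFun (G : Measure (EuclideanSpace ℝ (Fin d))) t
        = (Real.exp (-(unifVar x / 2)) : ℂ) * (Real.exp (-(unifVar y / 2)) : ℂ) := by
      change charFun (multivariateGaussian 0 (SigmaU + SigmaW)) t = _
      rw [charFun_multivariateGaussian hS, ← hl, Matrix.add_mulVec, dotProduct_add, hSigmaU,
        hSigmaW, dotProduct_cov_mulVec, dotProduct_cov_mulVec, ← Complex.ofReal_mul,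
        ← Real.exp_add, Complex.ofReal_exp]
      congr 1
      simp only [inner_zero_right, Complex.ofReal_zero, zero_mul, hx, hy]
      push_cast
      ring
    have hP : ∀ n, charFun (P n : Measure (EuclideanSpace ℝ (Fin d))) t
        = (∫ ω, Complex.exp
            (((Real.sqrt ((n : ℝ) * Real.log n))⁻¹ * score x ξ n ω : ℝ) * Complex.I) ∂μ)
          * (∫ ω, Complex.exp
            (((Real.sqrt ((n : ℝ) * Real.log n))⁻¹ * score y η n ω : ℝ) * Complex.I) ∂μ) := by
      intro n
      change charFun (μ.map (V n)) t = _
      rw [charFun_apply, integral_map (hVm n).aemeasurable (by fun_prop)]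
      have hinner : ∀ ω, inner ℝ (V n ω) t = (Real.sqrt ((n : ℝ) * Real.log n))⁻¹ * score x ξ n ω
          + (Real.sqrt ((n : ℝ) * Real.log n))⁻¹ * score y η n ω := by
        intro ω
        have h1 : score x ξ n ω + score y η n ω
            = l ⬝ᵥ (∑ k ∈ Finset.Icc 1 n, (u (ξ k ω) + w (η k ω)) - (n : ℝ) • (ub + wb)) := by
          have h2 : ∑ k ∈ Finset.Icc 1 n, (u (ξ k ω) + w (η k ω)) - (n : ℝ) • (ub + wb)
              = ∑ k ∈ Finset.Icc 1 n, ((u (ξ k ω) - ub) + (w (η k ω) - wb)) := by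
            have h3 : (n : ℝ) • (ub + wb) = ∑ k ∈ Finset.Icc 1 n, (ub + wb) := by
              simp [← Nat.cast_smul_eq_nsmul ℝ]
            rw [h3, ← Finset.sum_sub_distrib]
            refine Finset.sum_congr rfl fun k _ => ?_
            abel
          rw [h2, dotProduct_sum, score, score, ← Finset.sum_add_distrib]
          refine Finset.sum_congr rfl fun k _ => ?_
          rw [dotProduct_add]
        rw [← mul_add, h1]
        simp only [V, EuclideanSpace.inner_eq_star_dotProduct, star_trivial, dotProduct_smul,
          smul_eq_mul, ← hl]
      -- the two scores are functions of the two independent index sequences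
      have hmeas : ∀ z : Fin m → ℝ, Measurable fun a : ℕ → Fin m => Complex.exp
          (((Real.sqrt ((n : ℝ) * Real.log n))⁻¹ * ∑ k ∈ Finset.Icc 1 n, z (a k) : ℝ)
            * Complex.I) := by
        intro z
        have h1 : Measurable fun a : ℕ → Fin m => ∑ k ∈ Finset.Icc 1 n, z (a k) :=
          Finset.measurable_sum _ fun k _ =>
            (measurable_from_top (f := z)).comp (measurable_pi_apply k)
        have h2 : Measurable fun r : ℝ => Complex.exp
          (((Real.sqrt ((n : ℝ) * Real.log n))⁻¹ * r : ℝ) * Complex.I) := by fun_prop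
        exact h2.comp h1
      have hind := hERW.indep.integral_fun_comp_mul_comp
        (measurable_pi_lambda _ hERW.measurable_fst).aemeasurable
        (measurable_pi_lambda _ hERW.measurable_snd).aemeasurable
        (hmeas x).aestronglyMeasurable (hmeas y).aestronglyMeasurable
      refine Eq.trans ?_ hind
      refine integral_congr_ae (Eventually.of_forall fun ω => ?_)
      simp only [hinner]
      rw [← Complex.exp_add, ← add_mul, ← Complex.ofReal_add]
      rfl
    rw [hG]
    simp_rw [hP]
    exact (tendsto_integral_exp_score hξ (sum_centered_eq_zero hm u hub l)).mul
      (tendsto_integral_exp_score hη (sum_centered_eq_zero hm w hwb l))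
  rw [ProbabilityMeasure.tendsto_iff_forall_integral_tendsto] at hconv
  have hcont : Continuous (WithLp.ofLp : EuclideanSpace ℝ (Fin d) → Fin d → ℝ) := by fun_prop
  obtain ⟨g, hg⟩ : ∃ g : BoundedContinuousFunction (EuclideanSpace ℝ (Fin d)) ℝ,
      ∀ z, g z = f (WithLp.ofLp z) := ⟨f.compContinuous ⟨WithLp.ofLp, hcont⟩, fun _ => rfl⟩
  have hf := hconv g
  have hlim : ∫ z, g z ∂(multivariateGaussian 0 (SigmaU + SigmaW))
      = ∫ z, f z ∂((multivariateGaussian 0 (SigmaU + SigmaW)).map WithLp.ofLp) := by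
    rw [integral_map hofLp.aemeasurable f.continuous.measurable.aestronglyMeasurable]
    simp only [hg]
  have hpre : ∀ n, ∫ z, g z ∂(μ.map (V n)) = ∫ ω, f ((Real.sqrt ((n : ℝ) * Real.log n))⁻¹ •
      (∑ k ∈ Finset.Icc 1 n, (u (ξ k ω) + w (η k ω)) - (n : ℝ) • (ub + wb))) ∂μ := by
    intro n
    rw [integral_map (hVm n).aemeasurable g.continuous.measurable.aestronglyMeasurable]
    simp only [hg, V]
  rw [← hlim]
  exact hf.congr hpre
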